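/- arXiv:1602.03567 — 4 statements merged into one kernel-verified Lean document; each statement's English description precedes it below -/
import Mathlib

section
/- (Lemma 2.2.) Let k ≥ 1 and let (x,d) ∈ E × (0,∞) be such that the sphere ∂B(x,d) meets E. Then there exist x' ∈ A_k and d' ∈ [d − 2R·r_max^k, d + 2R·r_max^k] such that: (i) dist(x, x') ≤ R·r_max^k; (ii) d' = dist(x', y) for some y ∈ A_k; (iii) μ(B(x,d)) ≥ μ_k(B(x',d')). -/
/-!
Write `ε = R * rmax ^ (k + 1)`, a bound for the diameter of every cylinder of generation `k + 1`.
Choose `x'` as the point of the cloud lying in a cylinder containing `x`, and let `d'` be the least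
distance `dist x' y`, with `y` in the cloud, that is at least `d - 2ε`. A point of `E` on the sphere
`∂B(x, d)` has a cloud point within `ε`, which shows that such `y` exist and that `d' ≤ d + 2ε`.
By minimality a cloud point in `B(x', d')` is at distance less than `d - 2ε` from `x'`, so
the cylinder around it is contained in `B(x, d)`.

To compare the measures, iterate the self-similarity of `μ` (`measure_eq_sum_words`): `μ (B(x, d))`
is the sum over words `w` of `r_w ^ s * μ (f_w⁻¹ B(x, d))`, and the last factor equals `1` as soon as
`f_w(E) ⊆ B(x, d)`. Each word contributing to the discrete measure of `B(x', d')` therefore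
contributes the same weight to `μ (B(x, d))`.
-/

open MeasureTheory Metric Set

noncomputable section

/-- Composition of the maps of the IFS along a word (list of letters). -/
def fword {m : ℕ} {X : Type*} (f : Fin m → X → X) : List (Fin m) → X → X
  | [] => id
  | i :: w => f i ∘ fword f w

/-- Product of the contraction ratios along a word. -/
def rword {m : ℕ} (r : Fin m → ℝ) (w : List (Fin m)) : ℝ := (w.map r).prod

/-- The point clouds: `cloud f p k` is the set `A_{k+1}` of the paper
(`cloud f p 0 = A₁` is the set of fixed points). -/
def cloud {m : ℕ} {X : Type*} (f : Fin m → X → X) (p : Fin m → X) : ℕ → Set X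
  | 0 => Set.range p
  | k + 1 => ⋃ i, f i '' cloud f p k

/-- The discrete measure: `muk f p r s k` is the measure `μ_{k+1}` of the paper,
supported on `cloud f p k = A_{k+1}`. -/
def muk {m : ℕ} {X : Type*} [MeasurableSpace X] (f : Fin m → X → X) (p : Fin m → X)
    (r : Fin m → ℝ) (s : ℝ) (k : ℕ) : Measure X :=
  ∑ w : Fin (k + 1) → Fin m,
    ENNReal.ofReal ((∏ j, r (w j)) ^ s) •
      Measure.dirac (fword f (List.ofFn w) (p (w (Fin.last k))))

section Words

variable {m : ℕ} {X : Type*}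

theorem fword_ofFn_succ (f : Fin m → X → X) {k : ℕ} (w : Fin (k + 1) → Fin m) :
    fword f (List.ofFn w) = f (w 0) ∘ fword f (List.ofFn fun j => w j.succ) := by
  rw [List.ofFn_succ]
  rfl

theorem exists_word {f : Fin m → X → X} {E : Set X} (hE : E = ⋃ i, f i '' E) (k : ℕ) :
    ∀ x ∈ E, ∃ w : Fin k → Fin m, ∃ e ∈ E, fword f (List.ofFn w) e = x := by
  induction k with
  | zero => exact fun x hx => ⟨Fin.elim0, x, hx, by simp [fword]⟩
  | succ k ih =>
    intro x hx
    rw [hE] at hx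
    obtain ⟨i, y, hy, rfl⟩ := mem_iUnion.1 hx
    obtain ⟨w, e, he, rfl⟩ := ih y hy
    exact ⟨Fin.cons i w, e, he, by rw [fword_ofFn_succ]; simp⟩

theorem mem_cloud_iff {f : Fin m → X → X} {p : Fin m → X} (hp : ∀ i, f i (p i) = p i)
    (k : ℕ) (y : X) :
    y ∈ cloud f p k ↔
      ∃ w : Fin (k + 1) → Fin m, fword f (List.ofFn w) (p (w (Fin.last k))) = y := by
  induction k generalizing y with
  | zero =>
    constructor
    · rintro ⟨i, rfl⟩
      exact ⟨fun _ => i, by simp [fword, hp]⟩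
    · rintro ⟨w, rfl⟩
      exact ⟨w 0, by simp [fword, hp]⟩
  | succ k ih =>
    constructor
    · intro hy
      obtain ⟨i, z, hz, rfl⟩ := mem_iUnion.1 hy
      obtain ⟨w, rfl⟩ := (ih z).1 hz
      refine ⟨Fin.cons i w, ?_⟩
      rw [fword_ofFn_succ, ← Fin.succ_last]
      simp
    · rintro ⟨w, rfl⟩
      rw [fword_ofFn_succ, ← Fin.succ_last]
      exact mem_iUnion.2 ⟨w 0, mem_image_of_mem _ ((ih _).2 ⟨fun j => w j.succ, rfl⟩)⟩

theorem dist_fword_le [PseudoMetricSpace X] {f : Fin m → X → X} {r : Fin m → ℝ}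
    (hr : ∀ i, 0 ≤ r i) (hsim : ∀ i x y, dist (f i x) (f i y) = r i * dist x y) {ρ : ℝ}
    (hρ : ∀ i, r i ≤ ρ) {k : ℕ} (w : Fin k → Fin m) (a b : X) :
    dist (fword f (List.ofFn w) a) (fword f (List.ofFn w) b) ≤ ρ ^ k * dist a b := by
  induction k with
  | zero => simp [fword]
  | succ k ih =>
    have h0 : 0 ≤ ρ := (hr (w 0)).trans (hρ (w 0))
    rw [fword_ofFn_succ, Function.comp_apply, Function.comp_apply, hsim, pow_succ', mul_assoc]
    exact mul_le_mul (hρ _) (ih _) dist_nonneg h0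

/-- A nearest point `e ∈ E` to the fixed point must be the fixed point itself, since `g e ∈ E` is
nearer by the contraction factor. -/
theorem fixedPoint_mem [MetricSpace X] {g : X → X} {ρ : ℝ} (hρ : ρ < 1)
    (hg : ∀ x y, dist (g x) (g y) = ρ * dist x y) {E : Set X} (hne : E.Nonempty)
    (hE : IsCompact E) (hgE : ∀ e ∈ E, g e ∈ E) {q : X} (hq : g q = q) : q ∈ E := by
  obtain ⟨e, he, hmin⟩ := hE.exists_infDist_eq_dist hne q
  have h1 : dist q e ≤ ρ * dist q e := by
    calc dist q e ≤ dist q (g e) := hmin ▸ infDist_le_dist_of_mem (hgE e he)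
      _ = ρ * dist q e := by rw [← hg, hq]
  have h2 : dist q e = 0 := by nlinarith [dist_nonneg (x := q) (y := e)]
  rwa [dist_eq_zero.1 h2]

theorem measure_eq_sum_words [MeasurableSpace X] {f : Fin m → X → X}
    (hf : ∀ i, Measurable (f i)) {r : Fin m → ℝ} (hr : ∀ i, 0 ≤ r i) {s : ℝ} {μ : Measure X}
    (hμ : ∀ A : Set X, MeasurableSet A →
      μ A = ∑ i, ENNReal.ofReal (r i ^ s) * μ (f i ⁻¹' A)) (k : ℕ) :
    ∀ A : Set X, MeasurableSet A →
      μ A = ∑ w : Fin k → Fin m, ENNReal.ofReal ((∏ j, r (w j)) ^ s) *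
        μ (fword f (List.ofFn w) ⁻¹' A) := by
  induction k with
  | zero => simp [fword]
  | succ k ih =>
    intro A hA
    rw [hμ A hA, ← (Fin.consEquiv fun _ => Fin m).sum_comp, Fintype.sum_prod_type]
    refine Finset.sum_congr rfl fun i _ => ?_
    rw [ih _ (hf i hA), Finset.mul_sum]
    refine Finset.sum_congr rfl fun w _ => ?_
    have hprod : 0 ≤ ∏ j, r (w j) := Finset.prod_nonneg fun j _ => hr _
    simp only [Fin.consEquiv_apply, fword_ofFn_succ, Fin.prod_univ_succ, Fin.cons_zero,
      Fin.cons_succ, preimage_comp]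
    rw [Real.mul_rpow (hr i) hprod, ENNReal.ofReal_mul (Real.rpow_nonneg (hr i) s), mul_assoc]

end Words

theorem stmt5
    (n m : ℕ) (hn : 1 ≤ n) (hm : 2 ≤ m)
    (f : Fin m → EuclideanSpace ℝ (Fin n) → EuclideanSpace ℝ (Fin n))
    (r : Fin m → ℝ) (hr : ∀ i, r i ∈ Set.Ioo (0 : ℝ) 1)
    (hsim : ∀ i x y, dist (f i x) (f i y) = r i * dist x y)
    (E : Set (EuclideanSpace ℝ (Fin n)))
    (hEne : E.Nonempty) (hEcpt : IsCompact E)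
    (hEinv : E = ⋃ i, f i '' E)
    (hssc : ∀ i j, i ≠ j → f i '' E ∩ f j '' E = ∅)
    (s : ℝ) (hs : 0 < s) (hsum : ∑ i, r i ^ s = 1)
    (μ : Measure (EuclideanSpace ℝ (Fin n)))
    (hμprob : IsProbabilityMeasure μ) (hμE : μ E = 1)
    (hμself : ∀ A : Set (EuclideanSpace ℝ (Fin n)), MeasurableSet A →
      μ A = ∑ i, ENNReal.ofReal (r i ^ s) * μ (f i ⁻¹' A))
    (p : Fin m → EuclideanSpace ℝ (Fin n)) (hp : ∀ i, f i (p i) = p i)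
    (rmin rmax : ℝ)
    (hrmin₁ : ∃ i, rmin = r i) (hrmin₂ : ∀ i, rmin ≤ r i)
    (hrmax₁ : ∃ i, rmax = r i) (hrmax₂ : ∀ i, r i ≤ rmax)
    (c R : ℝ) (hcpos : 0 < c)
    (hc : c = sInf {d : ℝ | ∃ i j, i ≠ j ∧ ∃ x ∈ f i '' E, ∃ y ∈ f j '' E, d = dist x y})
    (hR : R = Metric.diam E) :
    ∀ k : ℕ, ∀ x ∈ E, ∀ d : ℝ, 0 < d → (Metric.sphere x d ∩ E).Nonempty →
      ∃ x' ∈ cloud f p k,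
        ∃ d' ∈ Set.Icc (d - 2 * R * rmax ^ (k + 1)) (d + 2 * R * rmax ^ (k + 1)),
          dist x x' ≤ R * rmax ^ (k + 1) ∧ (∃ y ∈ cloud f p k, d' = dist x' y) ∧
          muk f p r s k (Metric.ball x' d') ≤ μ (Metric.ball x d) := by
  intro k x hx d _ ⟨z, hzs, hz⟩
  have hr0 : ∀ i, 0 ≤ r i := fun i => (hr i).1.le
  have hinv : ∀ i, ∀ e ∈ E, f i e ∈ E := fun i e he => by
    rw [hEinv]
    exact mem_iUnion.2 ⟨i, mem_image_of_mem _ he⟩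
  have hpE : ∀ i, p i ∈ E := fun i =>
    fixedPoint_mem (hr i).2 (hsim i) hEne hEcpt (hinv i) (hp i)
  have hf : ∀ i, Measurable (f i) := fun i =>
    (LipschitzWith.of_dist_le_mul (K := ⟨r i, hr0 i⟩)
      fun a b => (hsim i a b).le).continuous.measurable
  have hmax0 : 0 ≤ rmax := by
    obtain ⟨i, rfl⟩ := hrmax₁
    exact hr0 i
  set ε := R * rmax ^ (k + 1) with hε
  have h2ε : 2 * R * rmax ^ (k + 1) = 2 * ε := by rw [hε, mul_assoc]
  rw [h2ε]
  have hcyl : ∀ w : Fin (k + 1) → Fin m, ∀ a ∈ E, ∀ b ∈ E,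
      dist (fword f (List.ofFn w) a) (fword f (List.ofFn w) b) ≤ ε := by
    intro w a ha b hb
    refine (dist_fword_le hr0 hsim hrmax₂ w a b).trans ?_
    rw [hε, mul_comm R, hR]
    exact mul_le_mul_of_nonneg_left (dist_le_diam_of_mem hEcpt.isBounded ha hb)
      (pow_nonneg hmax0 _)
  -- every point of `E` has a cloud point in its cylinder
  have hnear : ∀ u ∈ E, ∃ u' ∈ cloud f p k, dist u u' ≤ ε := by
    intro u hu
    obtain ⟨w, e, he, rfl⟩ := exists_word hEinv (k + 1) u hu
    exact ⟨_, (mem_cloud_iff hp k _).2 ⟨w, rfl⟩, hcyl w e he _ (hpE _)⟩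
  obtain ⟨x', hx', hxx'⟩ := hnear x hx
  obtain ⟨y₀, hy₀, hzy₀⟩ := hnear z hz
  have hfin : (cloud f p k).Finite := by
    refine (finite_range fun w : Fin (k + 1) → Fin m =>
      fword f (List.ofFn w) (p (w (Fin.last k)))).subset fun y hy => ?_
    exact (mem_cloud_iff hp k y).1 hy
  have hzx : dist z x = d := hzs
  have hlow : d - 2 * ε ≤ dist x' y₀ := by
    have h1 := dist_triangle4 z y₀ x' x
    rw [dist_comm y₀ x', dist_comm x' x] at h1
    linarith
  have hup : dist x' y₀ ≤ d + 2 * ε := by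
    have h1 := dist_triangle4 x' x z y₀
    rw [dist_comm x' x, dist_comm x z] at h1
    linarith
  obtain ⟨y, ⟨hy, hyd⟩, hmin⟩ :=
    exists_min_image {y ∈ cloud f p k | d - 2 * ε ≤ dist x' y} (dist x')
      (hfin.subset (sep_subset _ _)) ⟨y₀, hy₀, hlow⟩
  refine ⟨x', hx', dist x' y, ⟨hyd, (hmin y₀ ⟨hy₀, hlow⟩).trans hup⟩, hxx', ⟨y, hy, rfl⟩, ?_⟩
  rw [measure_eq_sum_words hf hr0 hμself (k + 1) _ measurableSet_ball, muk,
    Measure.finsetSum_apply]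
  refine Finset.sum_le_sum fun w _ => ?_
  rw [Measure.smul_apply, smul_eq_mul, Measure.dirac_apply' _ measurableSet_ball]
  gcongr
  refine indicator_apply_le' (fun hw => ?_) (fun _ => bot_le)
  -- by minimality of `dist x' y` the cloud point of `w` is closer to `x'` than `d - 2 * ε`
  have hclose : dist x' (fword f (List.ofFn w) (p (w (Fin.last k)))) < d - 2 * ε := by
    by_contra! hcon
    have h1 := hmin _ ⟨(mem_cloud_iff hp k _).2 ⟨w, rfl⟩, hcon⟩
    rw [mem_ball, dist_comm] at hw
    exact absurd hw h1.not_gt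
  rw [Pi.one_apply, ← hμE]
  refine measure_mono fun e he => ?_
  rw [mem_preimage, mem_ball]
  have h1 := dist_triangle4 (fword f (List.ofFn w) e)
    (fword f (List.ofFn w) (p (w (Fin.last k)))) x' x
  rw [dist_comm _ x', dist_comm x' x] at h1
  linarith [hcyl w e he _ (hpE (w (Fin.last k)))]
end
end

section
/- (Ball-enlargement identity.) Let i ∈ M, let x' ∈ E, set x := fᵢ(x'), and let d > 0. If B̄(x,d) ∩ E ⊆ fᵢ(E), then μ(B̄(x,d)) = rᵢ^s · μ(B̄(x', d/rᵢ)). In particular, the spherical densities coincide: (2d)^s / μ(B̄(x,d)) = (2d/rᵢ)^s / μ(B̄(x', d/rᵢ)). -/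
/-!
Apply the self-similarity equation of `μ` to the ball `B = closedBall (f i x') d`. Since `f i`
scales distances by exactly `r i`, the preimage `f i ⁻¹' B` is the ball of radius `d / r i` about
`x'`. For `j ≠ i`, a point `y ∈ E` with `f j y ∈ B` would give `f j y ∈ B ∩ E ⊆ f i '' E`,
contradicting strong separation; hence `f j ⁻¹' B` misses `E` and is `μ`-null, so only the `i`-th
term of the sum survives. The density identity follows by cancelling `r i ^ s`.
-/

open MeasureTheory Metric Set

noncomputable section

theorem stmt8
    (n m : ℕ) (hn : 1 ≤ n) (hm : 2 ≤ m)
    (f : Fin m → EuclideanSpace ℝ (Fin n) → EuclideanSpace ℝ (Fin n))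
    (r : Fin m → ℝ) (hr : ∀ i, r i ∈ Set.Ioo (0 : ℝ) 1)
    (hsim : ∀ i x y, dist (f i x) (f i y) = r i * dist x y)
    (E : Set (EuclideanSpace ℝ (Fin n)))
    (hEne : E.Nonempty) (hEcpt : IsCompact E)
    (hEinv : E = ⋃ i, f i '' E)
    (hssc : ∀ i j, i ≠ j → f i '' E ∩ f j '' E = ∅)
    (s : ℝ) (hs : 0 < s) (hsum : ∑ i, r i ^ s = 1)
    (μ : Measure (EuclideanSpace ℝ (Fin n)))
    (hμprob : IsProbabilityMeasure μ) (hμE : μ E = 1)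
    (hμself : ∀ A : Set (EuclideanSpace ℝ (Fin n)), MeasurableSet A →
      μ A = ∑ i, ENNReal.ofReal (r i ^ s) * μ (f i ⁻¹' A)) :
    ∀ i : Fin m, ∀ x' ∈ E, ∀ d : ℝ, 0 < d →
      Metric.closedBall (f i x') d ∩ E ⊆ f i '' E →
      μ (Metric.closedBall (f i x') d) =
          ENNReal.ofReal (r i ^ s) * μ (Metric.closedBall x' (d / r i)) ∧
      (2 * d) ^ s / (μ (Metric.closedBall (f i x') d)).toReal =
        (2 * (d / r i)) ^ s / (μ (Metric.closedBall x' (d / r i))).toReal := by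
  intro i x' _ d hd hsub
  have hri : 0 < r i := (hr i).1
  have hpre : f i ⁻¹' closedBall (f i x') d = closedBall x' (d / r i) := by
    ext y
    simp only [mem_preimage, mem_closedBall, hsim]
    rw [le_div_iff₀ hri, mul_comm]
  have hEc : μ Eᶜ = 0 := (prob_compl_eq_zero_iff hEcpt.measurableSet).2 hμE
  have hnull : ∀ j, j ≠ i → μ (f j ⁻¹' closedBall (f i x') d) = 0 := by
    intro j hj
    refine measure_mono_null ?_ hEc
    intro y hy hyE
    have hjE : f j y ∈ f j '' E := mem_image_of_mem _ hyE
    have hyE' : f j y ∈ E := by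
      rw [hEinv]
      exact mem_iUnion.2 ⟨j, hjE⟩
    have hmem : f j y ∈ f j '' E ∩ f i '' E := ⟨hjE, hsub ⟨hy, hyE'⟩⟩
    rw [hssc j i hj] at hmem
    exact hmem
  have hmain : μ (closedBall (f i x') d) =
      ENNReal.ofReal (r i ^ s) * μ (closedBall x' (d / r i)) := by
    rw [hμself _ measurableSet_closedBall, Finset.sum_eq_single i, hpre]
    · intro j _ hj
      rw [hnull j hj, mul_zero]
    · intro hi
      exact absurd (Finset.mem_univ i) hi
  refine ⟨hmain, ?_⟩
  have hrs : 0 < r i ^ s := Real.rpow_pos_of_pos hri s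
  rw [hmain, ENNReal.toReal_mul, ENNReal.toReal_ofReal hrs.le, ← mul_div_assoc,
    Real.div_rpow (by positivity) hri.le, div_div]
end
end

section
/- The infimum of the spherical density over all admissible balls equals the infimum over the restricted family 𝒜: inf{ (2d)^s / μ(B̄(x,d)) : x ∈ E, c ≤ d ≤ R } = inf{ (2d)^s / μ(B̄(x,d)) : (x,d) ∈ 𝒜 }. -/
/-!
The density `(2d)^s / μ(B̄(x,d))` is scale invariant: if `x = f i y` with `y ∈ E` and `B̄(x,d)` meets
no cylinder `f j '' E` with `j ≠ i`, then self-similarity of `μ` gives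
`μ(B̄(x,d)) = r i ^ s * μ(B̄(y, d / r i))` (`measure_closedBall_zoom`), so `(x,d)` and `(y, d / r i)`
have the same density. Zooming in this way multiplies the radius by a factor bounded away from `1`,
so it can be repeated only finitely often before either a ball meeting a second cylinder appears, or
the radius exceeds `R = diam E`. In the latter case the ball of radius `R` about the current center
already contains `E`, hence has mass `1`, meets every cylinder, and has smaller density
(`exists_restricted_le`). Thus every density is bounded below by one from the restricted family.
-/

open MeasureTheory Metric Set

noncomputable section

/-- Zooming into the cylinder of `f i y`: the ball only sees the part `f i '' E` of the attractor,
so only the `i`-th term of the self-similarity relation survives. -/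
theorem measure_closedBall_zoom {m : ℕ} {X : Type*} [PseudoMetricSpace X] [MeasurableSpace X]
    [BorelSpace X] {f : Fin m → X → X} {r : Fin m → ℝ} (hr : ∀ i, r i ∈ Set.Ioo (0 : ℝ) 1)
    (hsim : ∀ i x y, dist (f i x) (f i y) = r i * dist x y) {E : Set X} {s : ℝ}
    {μ : Measure X} (hμE : ∀ A : Set X, Disjoint A E → μ A = 0)
    (hμself : ∀ A : Set X, MeasurableSet A →
      μ A = ∑ i, ENNReal.ofReal (r i ^ s) * μ (f i ⁻¹' A))
    {i : Fin m} {y : X} {d : ℝ}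
    (hfar : ∀ j, j ≠ i → ¬ (closedBall (f i y) d ∩ f j '' E).Nonempty) :
    (μ (closedBall (f i y) d)).toReal = r i ^ s * (μ (closedBall y (d / r i))).toReal := by
  have hpre : f i ⁻¹' closedBall (f i y) d = closedBall y (d / r i) := by
    ext z
    simp only [mem_preimage, mem_closedBall, hsim]
    rw [le_div_iff₀ (hr i).1, mul_comm]
  rw [hμself _ measurableSet_closedBall, Finset.sum_eq_single i, hpre, ENNReal.toReal_mul,
    ENNReal.toReal_ofReal (Real.rpow_nonneg (hr i).1.le s)]
  · intro j _ hji
    rw [hμE, mul_zero]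
    rw [Set.disjoint_left]
    intro z hz hzE
    exact hfar j hji ⟨f j z, hz, z, hzE, rfl⟩
  · simp

/-- Any density is bounded below by a density from the restricted family. The number `N` bounds
the number of zooming steps before the radius exceeds `diam E`; no positivity of the ball masses
is needed, since zooming preserves the quotient even when the mass vanishes. -/
theorem exists_restricted_le {m : ℕ} (hm : 2 ≤ m) {X : Type*} [PseudoMetricSpace X]
    [MeasurableSpace X] [BorelSpace X] {f : Fin m → X → X} {r : Fin m → ℝ}
    (hr : ∀ i, r i ∈ Set.Ioo (0 : ℝ) 1)
    (hsim : ∀ i x y, dist (f i x) (f i y) = r i * dist x y) {E : Set X}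
    (hEbdd : Bornology.IsBounded E) (hEinv : E = ⋃ i, f i '' E) {s : ℝ} (hs : 0 < s)
    {μ : Measure X} [IsProbabilityMeasure μ] (hμ1 : μ E = 1)
    (hμE : ∀ A : Set X, Disjoint A E → μ A = 0)
    (hμself : ∀ A : Set X, MeasurableSet A →
      μ A = ∑ i, ENNReal.ofReal (r i ^ s) * μ (f i ⁻¹' A))
    {c : ℝ} (hcpos : 0 < c) {ι : X → Fin m} (hι : ∀ x ∈ E, x ∈ f (ι x) '' E)
    {ρ : ℝ} (hρ : ∀ i, r i ≤ ρ) (N : ℕ) :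
    ∀ x ∈ E, ∀ d : ℝ, c ≤ d → d ≤ diam E → diam E * ρ ^ N < d →
      ∃ x' ∈ E, ∃ d' : ℝ, c ≤ d' ∧ d' ≤ diam E ∧
        (∃ j, j ≠ ι x' ∧ (closedBall x' d' ∩ f j '' E).Nonempty) ∧
        (2 * d') ^ s / (μ (closedBall x' d')).toReal ≤
          (2 * d) ^ s / (μ (closedBall x d)).toReal := by
  induction N with
  | zero =>
    intro x _ d _ hdR hlt
    simp only [pow_zero, mul_one] at hlt
    exact absurd hdR (not_le.2 hlt)
  | succ N ih =>
    intro x hx d hcd hdR hlt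
    by_cases hA : ∃ j, j ≠ ι x ∧ (closedBall x d ∩ f j '' E).Nonempty
    · exact ⟨x, hx, d, hcd, hdR, hA, le_rfl⟩
    obtain ⟨y, hy, hyx⟩ := hι x hx
    have hri := hr (ι x)
    have hd : 0 < d := hcpos.trans_le hcd
    have hdd : d ≤ d / r (ι x) := by
      rw [le_div_iff₀ hri.1]
      nlinarith [hri.2]
    have hball : (μ (closedBall x d)).toReal =
        r (ι x) ^ s * (μ (closedBall y (d / r (ι x)))).toReal := by
      have hfar : ∀ j, j ≠ ι x → ¬ (closedBall (f (ι x) y) d ∩ f j '' E).Nonempty := by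
        intro j hj hne
        rw [hyx] at hne
        exact hA ⟨j, hj, hne⟩
      have h := measure_closedBall_zoom hr hsim hμE hμself hfar
      rwa [hyx] at h
    have hval : (2 * d) ^ s / (μ (closedBall x d)).toReal =
        (2 * (d / r (ι x))) ^ s / (μ (closedBall y (d / r (ι x)))).toReal := by
      rw [hball, ← mul_div_assoc, Real.div_rpow (by positivity) hri.1.le, div_div]
    rw [hval]
    by_cases hle : d / r (ι x) ≤ diam E
    · refine ih y hy _ (hcd.trans hdd) hle ?_
      rw [lt_div_iff₀ hri.1]
      have hρ0 : 0 < ρ := hri.1.trans_le (hρ _)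
      calc diam E * ρ ^ N * r (ι x) ≤ diam E * ρ ^ N * ρ := by
            have := diam_nonneg (s := E)
            gcongr
            exact hρ _
        _ = diam E * ρ ^ (N + 1) := by ring
        _ < d := hlt
    · push Not at hle
      have hsub : E ⊆ closedBall y (diam E) := fun z hz => dist_le_diam_of_mem hEbdd hz hy
      have hone : ∀ t, diam E ≤ t → μ (closedBall y t) = 1 := fun t ht =>
        le_antisymm prob_le_one
          (hμ1 ▸ measure_mono (hsub.trans (closedBall_subset_closedBall ht)))
      have : Nontrivial (Fin m) := Fin.nontrivial_iff_two_le.2 hm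
      obtain ⟨j, hj⟩ := exists_ne (ι y)
      refine ⟨y, hy, diam E, hcd.trans hdR, le_rfl, ⟨j, hj, f j y, hsub ?_, y, hy, rfl⟩, ?_⟩
      · rw [hEinv]
        exact mem_iUnion.2 ⟨j, y, hy, rfl⟩
      · rw [hone _ le_rfl, hone _ hle.le]
        have := diam_nonneg (s := E)
        gcongr

theorem stmt9
    (n m : ℕ) (hn : 1 ≤ n) (hm : 2 ≤ m)
    (f : Fin m → EuclideanSpace ℝ (Fin n) → EuclideanSpace ℝ (Fin n))
    (r : Fin m → ℝ) (hr : ∀ i, r i ∈ Set.Ioo (0 : ℝ) 1)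
    (hsim : ∀ i x y, dist (f i x) (f i y) = r i * dist x y)
    (E : Set (EuclideanSpace ℝ (Fin n)))
    (hEne : E.Nonempty) (hEcpt : IsCompact E)
    (hEinv : E = ⋃ i, f i '' E)
    (hssc : ∀ i j, i ≠ j → f i '' E ∩ f j '' E = ∅)
    (s : ℝ) (hs : 0 < s) (hsum : ∑ i, r i ^ s = 1)
    (μ : Measure (EuclideanSpace ℝ (Fin n)))
    (hμprob : IsProbabilityMeasure μ) (hμE : μ E = 1)
    (hμself : ∀ A : Set (EuclideanSpace ℝ (Fin n)), MeasurableSet A →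
      μ A = ∑ i, ENNReal.ofReal (r i ^ s) * μ (f i ⁻¹' A))
    (c R : ℝ) (hcpos : 0 < c)
    (hc : c = sInf {d : ℝ | ∃ i j, i ≠ j ∧ ∃ x ∈ f i '' E, ∃ y ∈ f j '' E, d = dist x y})
    (hR : R = Metric.diam E)
    (ι : EuclideanSpace ℝ (Fin n) → Fin m)
    (hι : ∀ x ∈ E, x ∈ f (ι x) '' E) :
    sInf {v : ℝ | ∃ x ∈ E, ∃ d : ℝ, c ≤ d ∧ d ≤ R ∧
        v = (2 * d) ^ s / (μ (Metric.closedBall x d)).toReal} =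
      sInf {v : ℝ | ∃ x ∈ E, ∃ d : ℝ, c ≤ d ∧ d ≤ R ∧
        (∃ j, j ≠ ι x ∧ (Metric.closedBall x d ∩ f j '' E).Nonempty) ∧
        v = (2 * d) ^ s / (μ (Metric.closedBall x d)).toReal} := by
  subst hR
  have hμ0 : ∀ A : Set (EuclideanSpace ℝ (Fin n)), Disjoint A E → μ A = 0 := by
    intro A hA
    refine measure_mono_null hA.subset_compl_right ?_
    exact (prob_compl_eq_zero_iff hEcpt.measurableSet).2 hμE
  obtain ⟨ρ, hρ1, hρ⟩ : ∃ ρ : ℝ, ρ < 1 ∧ ∀ i, r i ≤ ρ := by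
    have : Nonempty (Fin m) := ⟨⟨0, by omega⟩⟩
    obtain ⟨i, hi⟩ := Finite.exists_max r
    exact ⟨r i, (hr i).2, hi⟩
  have hρ0 : 0 ≤ ρ := (hr ⟨0, by omega⟩).1.le.trans (hρ _)
  have key : ∀ x ∈ E, ∀ d : ℝ, c ≤ d → d ≤ diam E →
      ∃ x' ∈ E, ∃ d' : ℝ, c ≤ d' ∧ d' ≤ diam E ∧
        (∃ j, j ≠ ι x' ∧ (closedBall x' d' ∩ f j '' E).Nonempty) ∧
        (2 * d') ^ s / (μ (closedBall x' d')).toReal ≤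
          (2 * d) ^ s / (μ (closedBall x d)).toReal := by
    intro x hx d hcd hdR
    have hlim := (tendsto_pow_atTop_nhds_zero_of_lt_one hρ0 hρ1).const_mul (diam E)
    rw [mul_zero] at hlim
    obtain ⟨N, hN⟩ := (hlim.eventually_lt_const (hcpos.trans_le hcd)).exists
    exact exists_restricted_le hm hr hsim hEcpt.isBounded hEinv hs hμE hμ0 hμself hcpos hι hρ N
      x hx d hcd hdR hN
  have hnonneg : ∀ (x : EuclideanSpace ℝ (Fin n)) (d : ℝ), c ≤ d →
      0 ≤ (2 * d) ^ s / (μ (closedBall x d)).toReal := by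
    intro x d hcd
    have : 0 < d := hcpos.trans_le hcd
    positivity
  -- The empty case is separate because the real infimum of the empty set is the junk value `0`.
  rcases Set.eq_empty_or_nonempty {v : ℝ | ∃ x ∈ E, ∃ d : ℝ, c ≤ d ∧ d ≤ diam E ∧
        v = (2 * d) ^ s / (μ (closedBall x d)).toReal} with hemp | hne
  · rw [hemp]
    congr 1
    symm
    rw [Set.eq_empty_iff_forall_notMem] at hemp ⊢
    rintro v ⟨x, hx, d, h1, h2, -, hv⟩
    exact hemp v ⟨x, hx, d, h1, h2, hv⟩
  apply le_antisymm
  · refine csInf_le_csInf ⟨0, ?_⟩ ?_ ?_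
    · rintro v ⟨x, -, d, h1, -, rfl⟩
      exact hnonneg x d h1
    · obtain ⟨v, x, hx, d, h1, h2, -⟩ := hne
      obtain ⟨x', hx', d', h1', h2', h3', -⟩ := key x hx d h1 h2
      exact ⟨_, x', hx', d', h1', h2', h3', rfl⟩
    · rintro v ⟨x, hx, d, h1, h2, -, hv⟩
      exact ⟨x, hx, d, h1, h2, hv⟩
  · refine le_csInf hne ?_
    rintro v ⟨x, hx, d, h1, h2, rfl⟩
    obtain ⟨x', hx', d', h1', h2', h3', hle⟩ := key x hx d h1 h2
    refine le_trans (csInf_le ⟨0, ?_⟩ ⟨x', hx', d', h1', h2', h3', rfl⟩) hle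
    rintro w ⟨z, -, e, h, -, -, rfl⟩
    exact hnonneg z e h
end
end

section
/- (Second half of the proof of Theorem 2.) Let k ≥ 1, let q ≥ 1 be the integer with R·r_max^q ≤ c < R·r_max^{q−1}, and set ϵ_k := s·2^{s+1}·R·𝒬·r_max^k / r_min^{q·s}, where 𝒬 := R^{s−1} if s ≥ 1 and 𝒬 := c^{s−1} if s < 1. Let x ∈ A_k, let d = dist(x, y) for some y ∈ A_k, and suppose there exists z ∈ A_k ∩ B̄(x,d) with i₁^z ≠ i₁^x. Then there exists d' ∈ [c, R] with (x, d') ∈ 𝒜 such that (2d')^s/μ(B̄(x,d')) − (2d)^s/μ_k(B̄(x,d)) ≤ ϵ_k. -/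
/-!
Write `K = k + 1`, `d = dist x y`, `δ = R * rmax ^ K`. Each cylinder `f_w(E)` of a word of length `K`
has diameter at most `δ`, carries `μ`-mass `r_w ^ s`, and contains the atom of `μ_K` of the same mass.
Hence `μ_K(B(x, d)) ≤ μ(B(x, d'))` for `d' = min (d + δ) R` (`muk_le_measure`), and the left-hand side
of the claim is at most `((2d')^s - (2d)^s) / μ_K(B(x, d))`. The mean value theorem bounds the
numerator by `2^s * s * 𝒬 * δ` (`rpow_sub_le`). Since `d ≥ c ≥ R * rmax ^ q`, the ball `B(x, d)`
contains the cylinder of order `q` around `x` (when `q ≤ K`; otherwise the atom at `x` suffices), so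
that `μ_K(B(x, d)) ≥ rmin ^ (q * s)` (`le_muk`).

Both comparisons of measures are proved without words, by induction, from the self-similarity
relation `μ_{K+1}(A) = ∑ i, r_i ^ s * μ_K(f_i⁻¹ A)` (`muk_succ_apply`).
-/

open MeasureTheory Metric Set

noncomputable section

lemma cloud_subset {m : ℕ} {X : Type*} {f : Fin m → X → X} {p : Fin m → X} {E : Set X}
    (hE : ∀ i, ∀ e ∈ E, f i e ∈ E) (hpE : ∀ i, p i ∈ E) (k : ℕ) :
    cloud f p k ⊆ E := by
  induction k with
  | zero => rintro _ ⟨i, rfl⟩; exact hpE i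
  | succ k ih =>
    intro x hx
    obtain ⟨i, e, he, rfl⟩ := Set.mem_iUnion.1 hx
    exact hE i e (ih he)

section Discrete

variable {m : ℕ} {X : Type*} [MeasurableSpace X] {f : Fin m → X → X} {p : Fin m → X}
  {r : Fin m → ℝ} {s : ℝ}

lemma muk_apply (k : ℕ) {A : Set X} (hA : MeasurableSet A) :
    muk f p r s k A = ∑ w : Fin (k + 1) → Fin m, ENNReal.ofReal ((∏ j, r (w j)) ^ s) *
      A.indicator 1 (fword f (List.ofFn w) (p (w (Fin.last k)))) := by
  simp [muk, Measure.finsetSum_apply, Measure.dirac_apply' _ hA]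

lemma muk_zero_apply (hp : ∀ i, f i (p i) = p i) {A : Set X} (hA : MeasurableSet A) :
    muk f p r s 0 A = ∑ i, ENNReal.ofReal (r i ^ s) * A.indicator 1 (p i) := by
  rw [muk_apply 0 hA]
  refine Fintype.sum_equiv (Equiv.funUnique (Fin 1) (Fin m)) _ _ fun w => ?_
  simp [fword, hp]

lemma muk_succ_apply (hr : ∀ i, 0 ≤ r i) (k : ℕ) {A : Set X} (hA : MeasurableSet A)
    (hf : ∀ i, Measurable (f i)) :
    muk f p r s (k + 1) A = ∑ i, ENNReal.ofReal (r i ^ s) * muk f p r s k (f i ⁻¹' A) := by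
  rw [muk_apply (k + 1) hA]
  rw [← (Fin.consEquiv (fun _ : Fin (k + 2) => Fin m)).sum_comp, Fintype.sum_prod_type]
  refine Finset.sum_congr rfl fun i _ => ?_
  rw [muk_apply k (hf i hA), Finset.mul_sum]
  refine Finset.sum_congr rfl fun w _ => ?_
  have h1 : Fin.last (k + 1) = (Fin.last k).succ := rfl
  rw [← mul_assoc, ← ENNReal.ofReal_mul (Real.rpow_nonneg (hr i) s),
    ← Real.mul_rpow (hr i) (Finset.prod_nonneg fun j _ => hr _), h1, Fin.prod_univ_succ,
    List.ofFn_succ]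
  rfl

lemma muk_le_one (hr : ∀ i, 0 ≤ r i) (hsum : ∑ i, r i ^ s = 1) (hp : ∀ i, f i (p i) = p i)
    (hf : ∀ i, Measurable (f i)) (k : ℕ) (A : Set X) : muk f p r s k A ≤ 1 := by
  have hsum' : ∑ i, ENNReal.ofReal (r i ^ s) = 1 := by
    rw [← ENNReal.ofReal_sum_of_nonneg fun i _ => Real.rpow_nonneg (hr i) s, hsum,
      ENNReal.ofReal_one]
  refine (measure_mono (Set.subset_univ A)).trans (le_of_eq ?_)
  induction k with
  | zero => simp [muk_zero_apply hp MeasurableSet.univ, hsum']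
  | succ k ih =>
    rw [muk_succ_apply hr k MeasurableSet.univ hf]
    simp [ih, hsum']

lemma muk_eq_one (hr : ∀ i, 0 ≤ r i) (hsum : ∑ i, r i ^ s = 1) (hp : ∀ i, f i (p i) = p i)
    (hf : ∀ i, Measurable (f i)) {E : Set X} (hE : ∀ i, ∀ e ∈ E, f i e ∈ E)
    (hpE : ∀ i, p i ∈ E) (k : ℕ) {A : Set X} (hA : MeasurableSet A) (hEA : E ⊆ A) :
    muk f p r s k A = 1 := by
  have hsum' : ∑ i, ENNReal.ofReal (r i ^ s) = 1 := by
    rw [← ENNReal.ofReal_sum_of_nonneg fun i _ => Real.rpow_nonneg (hr i) s, hsum,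
      ENNReal.ofReal_one]
  induction k generalizing A with
  | zero =>
    rw [muk_zero_apply hp hA, ← hsum']
    refine Finset.sum_congr rfl fun i _ => ?_
    simp [hEA (hpE i)]
  | succ k ih =>
    rw [muk_succ_apply hr k hA hf, ← hsum']
    refine Finset.sum_congr rfl fun i _ => ?_
    rw [ih (hf i hA) (fun e he => hEA (hE i e he)), mul_one]

end Discrete

section Comparison

variable {m : ℕ} {X : Type*} [MetricSpace X]
  {f : Fin m → X → X} {p : Fin m → X} {r : Fin m → ℝ} {s : ℝ} {E : Set X} {R rmin rmax : ℝ}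

/-- The point of a compact invariant set nearest to the fixed point `p i` is moved closer to `p i`
by `f i`, so its distance to `p i` vanishes. -/
lemma fixed_mem (hr : ∀ i, r i ∈ Set.Ioo (0 : ℝ) 1)
    (hsim : ∀ i x y, dist (f i x) (f i y) = r i * dist x y) (hp : ∀ i, f i (p i) = p i)
    (hEne : E.Nonempty) (hEcpt : IsCompact E) (hE : ∀ i, ∀ e ∈ E, f i e ∈ E) (i : Fin m) :
    p i ∈ E := by
  obtain ⟨e, he, hmin⟩ := hEcpt.exists_isMinOn hEne
    (f := fun e => dist (p i) e) (by fun_prop)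
  have h1 : dist (p i) e ≤ dist (p i) (f i e) := hmin (hE i e he)
  have h2 : dist (p i) (f i e) = r i * dist (p i) e := by
    rw [← hsim, hp]
  have h3 : dist (p i) e = 0 := by
    have := (hr i).2
    have := dist_nonneg (x := p i) (y := e)
    nlinarith
  rwa [dist_eq_zero.1 h3]

variable [MeasurableSpace X]

/-- Each atom of `μ_{k+1}` lying in `A` sits in a cylinder of at least the same `μ`-mass and of
diameter at most `R * rmax ^ (k + 1)`, which is therefore contained in `B`. -/
lemma muk_le_measure (hr : ∀ i, 0 ≤ r i) (hf : ∀ i, Measurable (f i))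
    (hsim : ∀ i x y, dist (f i x) (f i y) = r i * dist x y) (hp : ∀ i, f i (p i) = p i)
    (hE : ∀ i, ∀ e ∈ E, f i e ∈ E) (hpE : ∀ i, p i ∈ E)
    (hdiam : ∀ x ∈ E, ∀ y ∈ E, dist x y ≤ R) (hrmax : ∀ i, r i ≤ rmax)
    {μ : Measure X} (hμE : μ E = 1)
    (hμself : ∀ A : Set X, MeasurableSet A →
      μ A = ∑ i, ENNReal.ofReal (r i ^ s) * μ (f i ⁻¹' A))
    (k : ℕ) {A B : Set X} (hA : MeasurableSet A) (hB : MeasurableSet B)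
    (hAB : ∀ a ∈ A, a ∈ E → ∀ e ∈ E, dist a e ≤ R * rmax ^ (k + 1) → e ∈ B) :
    muk f p r s k A ≤ μ B := by
  induction k generalizing A B with
  | zero =>
    rw [muk_zero_apply hp hA, hμself B hB]
    refine Finset.sum_le_sum fun i _ => mul_le_mul_right ?_ _
    by_cases hi : p i ∈ A
    · have : E ⊆ f i ⁻¹' B := fun e he => by
        refine hAB (p i) hi (hpE i) (f i e) (hE i e he) ?_
        rw [← hp i, hsim, zero_add, pow_one, mul_comm]
        exact mul_le_mul (hdiam _ (hpE i) _ he) (hrmax i) (hr i)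
          (dist_nonneg.trans (hdiam _ (hpE i) _ (hpE i)))
      simpa [hi, hμE] using measure_mono (μ := μ) this
    · simp [hi]
  | succ k ih =>
    rw [muk_succ_apply hr k hA hf, hμself B hB]
    refine Finset.sum_le_sum fun i _ => mul_le_mul_right ?_ _
    refine ih (hf i hA) (hf i hB) fun a ha haE e he hd => ?_
    refine hAB (f i a) ha (hE i a haE) (f i e) (hE i e he) ?_
    rw [hsim, pow_succ, ← mul_assoc, mul_comm]
    exact mul_le_mul hd (hrmax i) (hr i) (dist_nonneg.trans hd)

/-- A set containing every point of `E` within `R * rmax ^ q` of a point of the cloud contains an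
order-`q` cylinder around that point, or at least the atom itself when `q > k + 1`. -/
lemma le_muk (hr : ∀ i, r i ∈ Set.Ioo (0 : ℝ) 1) (hs : 0 < s) (hsum : ∑ i, r i ^ s = 1)
    (hf : ∀ i, Measurable (f i))
    (hsim : ∀ i x y, dist (f i x) (f i y) = r i * dist x y) (hp : ∀ i, f i (p i) = p i)
    (hE : ∀ i, ∀ e ∈ E, f i e ∈ E) (hpE : ∀ i, p i ∈ E)
    (hdiam : ∀ x ∈ E, ∀ y ∈ E, dist x y ≤ R) (hrmin0 : 0 < rmin) (hrmin : ∀ i, rmin ≤ r i)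
    (hrmax : ∀ i, r i ≤ rmax) (q k : ℕ) {x : X} (hx : x ∈ cloud f p k)
    {A : Set X} (hA : MeasurableSet A) (hxA : ∀ e ∈ E, dist x e ≤ R * rmax ^ q → e ∈ A) :
    ENNReal.ofReal ((rmin ^ s) ^ q) ≤ muk f p r s k A := by
  have hr0 : ∀ i, 0 ≤ r i := fun i => (hr i).1.le
  have hmin0 : 0 ≤ rmin ^ s := Real.rpow_nonneg hrmin0.le s
  have hle : ∀ i, rmin ^ s ≤ r i ^ s := fun i => Real.rpow_le_rpow hrmin0.le (hrmin i) hs.le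
  have hle1 : ∀ i, r i ^ s ≤ 1 := fun i => Real.rpow_le_one (hr0 i) (hr i).2.le hs.le
  induction q generalizing k x A with
  | zero =>
    have hxE := cloud_subset hE hpE k hx
    rw [muk_eq_one hr0 hsum hp hf hE hpE k hA fun e he => hxA e he (by simpa using hdiam x hxE e he)]
    simp
  | succ q ih =>
    cases k with
    | zero =>
      obtain ⟨i, rfl⟩ := hx
      have hR : 0 ≤ R := dist_nonneg.trans (hdiam _ (hpE i) _ (hpE i))
      have hi : p i ∈ A := hxA _ (hpE i) (by
        rw [dist_self]; exact mul_nonneg hR (pow_nonneg ((hr0 i).trans (hrmax i)) _))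
      rw [muk_zero_apply hp hA]
      refine le_trans ?_ (Finset.single_le_sum (fun _ _ => zero_le) (Finset.mem_univ i))
      simp only [hi, Set.indicator_of_mem, Pi.one_apply, mul_one]
      refine ENNReal.ofReal_le_ofReal ?_
      rw [pow_succ]
      exact (mul_le_of_le_one_left hmin0 (pow_le_one₀ hmin0 ((hle i).trans (hle1 i)))).trans (hle i)
    | succ k =>
      obtain ⟨i, x', hx', rfl⟩ := Set.mem_iUnion.1 hx
      rw [muk_succ_apply hr0 k hA hf]
      refine le_trans ?_ (Finset.single_le_sum (fun _ _ => zero_le) (Finset.mem_univ i))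
      rw [pow_succ', ENNReal.ofReal_mul hmin0]
      refine mul_le_mul' (ENNReal.ofReal_le_ofReal (hle i)) (ih k hx' (hf i hA) fun e he hd => ?_)
      refine hxA _ (hE i e he) ?_
      rw [hsim, pow_succ, ← mul_assoc, mul_comm]
      exact mul_le_mul hd (hrmax i) (hr0 i) (dist_nonneg.trans hd)

end Comparison

lemma rpow_sub_le {s c R d d' : ℝ} (hs : 0 < s) (hc : 0 < c) (hcd : c ≤ d) (hdd : d ≤ d')
    (hdR : d' ≤ R) :
    d' ^ s - d ^ s ≤ s * (if 1 ≤ s then R ^ (s - 1) else c ^ (s - 1)) * (d' - d) := by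
  have hpos : ∀ x ∈ Set.Icc d d', 0 < x := fun x hx => (hc.trans_le hcd).trans_le hx.1
  refine Convex.image_sub_le_mul_sub_of_deriv_le (convex_Icc d d') (f := fun x => x ^ s)
    (fun x hx => (Real.continuousAt_rpow_const x s (Or.inl (hpos x hx).ne')).continuousWithinAt)
    (fun x hx => ?_) (fun x hx => ?_) d (Set.left_mem_Icc.2 hdd) d' (Set.right_mem_Icc.2 hdd) hdd
  · exact (Real.differentiableAt_rpow_const_of_ne s
      (hpos x (interior_subset hx)).ne').differentiableWithinAt
  · have hx := interior_subset hx
    rw [Real.deriv_rpow_const]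
    refine mul_le_mul_of_nonneg_left ?_ hs.le
    split_ifs with h
    · exact Real.rpow_le_rpow (hpos x hx).le (hx.2.trans hdR) (by linarith)
    · exact Real.rpow_le_rpow_of_nonpos hc (hcd.trans hx.1) (by linarith)

theorem stmt16
    (n m : ℕ) (hn : 1 ≤ n) (hm : 2 ≤ m)
    (f : Fin m → EuclideanSpace ℝ (Fin n) → EuclideanSpace ℝ (Fin n))
    (r : Fin m → ℝ) (hr : ∀ i, r i ∈ Set.Ioo (0 : ℝ) 1)
    (hsim : ∀ i x y, dist (f i x) (f i y) = r i * dist x y)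
    (E : Set (EuclideanSpace ℝ (Fin n)))
    (hEne : E.Nonempty) (hEcpt : IsCompact E)
    (hEinv : E = ⋃ i, f i '' E)
    (hssc : ∀ i j, i ≠ j → f i '' E ∩ f j '' E = ∅)
    (s : ℝ) (hs : 0 < s) (hsum : ∑ i, r i ^ s = 1)
    (μ : Measure (EuclideanSpace ℝ (Fin n)))
    (hμprob : IsProbabilityMeasure μ) (hμE : μ E = 1)
    (hμself : ∀ A : Set (EuclideanSpace ℝ (Fin n)), MeasurableSet A →
      μ A = ∑ i, ENNReal.ofReal (r i ^ s) * μ (f i ⁻¹' A))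
    (p : Fin m → EuclideanSpace ℝ (Fin n)) (hp : ∀ i, f i (p i) = p i)
    (rmin rmax : ℝ)
    (hrmin₁ : ∃ i, rmin = r i) (hrmin₂ : ∀ i, rmin ≤ r i)
    (hrmax₁ : ∃ i, rmax = r i) (hrmax₂ : ∀ i, r i ≤ rmax)
    (c R : ℝ) (hcpos : 0 < c)
    (hc : c = sInf {d : ℝ | ∃ i j, i ≠ j ∧ ∃ x ∈ f i '' E, ∃ y ∈ f j '' E, d = dist x y})
    (hR : R = Metric.diam E)
    (ι : EuclideanSpace ℝ (Fin n) → Fin m)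
    (hι : ∀ x ∈ E, x ∈ f (ι x) '' E)
    (k q : ℕ) (hq1 : 1 ≤ q)
    (hqdef : R * rmax ^ q ≤ c ∧ c < R * rmax ^ (q - 1)) :
    ∀ x ∈ cloud f p k, ∀ y ∈ cloud f p k,
      (∃ z ∈ cloud f p k ∩ Metric.closedBall x (dist x y), ι z ≠ ι x) →
      ∃ d' ∈ Set.Icc c R,
        (x ∈ E ∧ ∃ j, j ≠ ι x ∧ (Metric.closedBall x d' ∩ f j '' E).Nonempty) ∧
        (2 * d') ^ s / (μ (Metric.closedBall x d')).toReal -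
            (2 * dist x y) ^ s / (muk f p r s k (Metric.closedBall x (dist x y))).toReal ≤
          s * (2 : ℝ) ^ (s + 1) * R *
            (if 1 ≤ s then R ^ (s - 1) else c ^ (s - 1)) *
            rmax ^ (k + 1) / rmin ^ ((q : ℝ) * s) := by
  rintro x hx y hy ⟨z, ⟨hz, hzx⟩, hιz⟩
  have hr0 : ∀ i, 0 ≤ r i := fun i => (hr i).1.le
  have hE : ∀ i, ∀ e ∈ E, f i e ∈ E := fun i e he => by
    rw [hEinv]; exact Set.mem_iUnion.2 ⟨i, e, he, rfl⟩
  have hf : ∀ i, Measurable (f i) := fun i => by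
    refine (LipschitzWith.of_dist_le_mul (K := (r i).toNNReal) fun a b => ?_).continuous.measurable
    rw [Real.coe_toNNReal _ (hr0 i), hsim]
  have hpE : ∀ i, p i ∈ E := fixed_mem hr hsim hp hEne hEcpt hE
  have hdiam : ∀ a ∈ E, ∀ b ∈ E, dist a b ≤ R := fun a ha b hb => by
    rw [hR]; exact Metric.dist_le_diam_of_mem hEcpt.isBounded ha hb
  have hxE := cloud_subset hE hpE k hx
  have hyE := cloud_subset hE hpE k hy
  have hzE := cloud_subset hE hpE k hz
  have hrmin0 : 0 < rmin := by
    obtain ⟨i, rfl⟩ := hrmin₁; exact (hr i).1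
  have hrmax0 : 0 < rmax := by
    obtain ⟨i, rfl⟩ := hrmax₁; exact (hr i).1
  set d := dist x y with hd
  have hzd : dist z x ≤ d := hzx
  have hcd : c ≤ d := by
    refine le_trans ?_ hzd
    rw [hc]
    refine csInf_le ⟨0, ?_⟩ ⟨ι z, ι x, hιz, z, hι z hzE, x, hι x hxE, rfl⟩
    rintro _ ⟨_, _, _, _, _, _, _, rfl⟩
    exact dist_nonneg
  have hdR : d ≤ R := hdiam x hxE y hyE
  have hRpos : 0 < R := hcpos.trans_le (hcd.trans hdR)
  set δ := R * rmax ^ (k + 1) with hδ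
  have hδ0 : 0 < δ := by positivity
  set d' := min (d + δ) R with hd'
  have hdd : d ≤ d' := le_min (by linarith) hdR
  have hd'R : d' ≤ R := min_le_right _ _
  have hd'δ : d' - d ≤ δ := by linarith [min_le_left (d + δ) R]
  refine ⟨d', ⟨hcd.trans hdd, hd'R⟩, ⟨hxE, ι z, hιz, z, ?_, hι z hzE⟩, ?_⟩
  · exact mem_closedBall.2 (hzd.trans hdd)
  have hup : muk f p r s k (closedBall x d) ≤ μ (closedBall x d') := by
    refine muk_le_measure hr0 hf hsim hp hE hpE hdiam hrmax₂ hμE hμself k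
      isClosed_closedBall.measurableSet isClosed_closedBall.measurableSet fun a ha _ e he hae => ?_
    refine mem_closedBall.2 (le_min ?_ (hdiam e he x hxE))
    have := mem_closedBall.1 ha
    linarith [dist_triangle e a x, dist_comm e a]
  have hlow : ENNReal.ofReal ((rmin ^ s) ^ q) ≤ muk f p r s k (closedBall x d) := by
    refine le_muk hr hs hsum hf hsim hp hE hpE hdiam hrmin0 hrmin₂ hrmax₂ q k hx
      isClosed_closedBall.measurableSet fun e he hxe => ?_
    rw [mem_closedBall, dist_comm]
    exact hxe.trans (hqdef.1.trans hcd)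
  have hfin : muk f p r s k (closedBall x d) ≠ ⊤ :=
    ((muk_le_one hr0 hsum hp hf k _).trans_lt ENNReal.one_lt_top).ne
  have hup' := ENNReal.toReal_mono (measure_ne_top μ _) hup
  have hlow' := (ENNReal.ofReal_le_iff_le_toReal hfin).1 hlow
  set a := (muk f p r s k (closedBall x d)).toReal
  set b := (μ (closedBall x d')).toReal
  have hpow : rmin ^ ((q : ℝ) * s) = (rmin ^ s) ^ q := by
    rw [mul_comm, Real.rpow_mul_natCast hrmin0.le]
  rw [hpow]
  set ρ := (rmin ^ s) ^ q with hρ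
  have hρ0 : 0 < ρ := by positivity
  have ha0 : 0 < a := hρ0.trans_le hlow'
  have hd0 : 0 < d := hcpos.trans_le hcd
  have hmvt := rpow_sub_le hs hcpos hcd hdd hd'R
  set Q := (if 1 ≤ s then R ^ (s - 1) else c ^ (s - 1)) with hQ
  have hQ0 : 0 < Q := by rw [hQ]; split_ifs <;> positivity
  have h2 : (2 * d') ^ s - (2 * d) ^ s ≤ 2 ^ s * (s * Q * δ) := by
    rw [Real.mul_rpow two_pos.le (hd0.le.trans hdd), Real.mul_rpow two_pos.le hd0.le, ← mul_sub]
    refine mul_le_mul_of_nonneg_left (hmvt.trans ?_) (by positivity)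
    exact mul_le_mul_of_nonneg_left hd'δ (by positivity)
  calc (2 * d') ^ s / b - (2 * d) ^ s / a
      ≤ (2 * d') ^ s / a - (2 * d) ^ s / a := by
        have : 0 ≤ 2 * d' := by linarith
        gcongr
    _ = ((2 * d') ^ s - (2 * d) ^ s) / a := by rw [sub_div]
    _ ≤ 2 ^ s * (s * Q * δ) / a := by gcongr
    _ ≤ 2 ^ s * (s * Q * δ) / ρ := by gcongr
    _ ≤ s * (2 : ℝ) ^ (s + 1) * R * Q * rmax ^ (k + 1) / ρ := by
        rw [Real.rpow_add_one two_ne_zero, hδ]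
        refine div_le_div_of_nonneg_right ?_ hρ0.le
        have : 0 < 2 ^ s * (s * Q * (R * rmax ^ (k + 1))) := by positivity
        nlinarith
end
end
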